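/- For every language L ⊆ A*, the cost c(L) is finite if and only if p_L(n) = O(n^α) for some real α ≥ 0, i.e., a language has finite cost if and only if its complexity is bounded above by a polynomial. -/

import Mathlib

open scoped ENNReal Pointwise

universe u

variable {A : Type u}

/-- The factor of `x` of length `n` starting at position `i`. -/
def wordSeg (x : ℕ → A) (i n : ℕ) : List A := (List.range n).map fun j => x (i + j)

/-- The set of finite factors of a one-sided infinite word (including the empty word). -/
def Fac (x : ℕ → A) : Set (List A) := {u | ∃ i n, u = wordSeg x i n}

/-- The factor of a two-sided word `x` of length `n` starting at position `i`. -/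
def wordSegZ (x : ℤ → A) (i : ℤ) (n : ℕ) : List A := (List.range n).map fun j => x (i + j)

/-- The set of finite factors of a two-sided infinite word (including the empty word). -/
def FacZ (x : ℤ → A) : Set (List A) := {u | ∃ (i : ℤ) (n : ℕ), u = wordSegZ x i n}

/-- The complexity of a language: the number of words of length `n` in it. -/
noncomputable def complexity (L : Set (List A)) (n : ℕ) : ℕ :=
  {u ∈ L | u.length = n}.ncard

/-- The accumulative complexity `p*_L(n) = Σ_{i=0}^{n} p_L(i)`. -/
noncomputable def accComplexity (L : Set (List A)) (n : ℕ) : ℕ :=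
  ∑ i ∈ Finset.range (n + 1), complexity L i

/-- Concatenation (product) of two languages. -/
def prodL (S T : Set (List A)) : Set (List A) := {w | ∃ s ∈ S, ∃ t ∈ T, w = s ++ t}

/-- `powL S k` = `S^k`, the set of concatenations of `k` elements of `S`. -/
def powL (S : Set (List A)) : ℕ → Set (List A)
  | 0 => {([] : List A)}
  | k + 1 => prodL (powL S k) S

/-- `f(n) = O(n^α)`. -/
def PolyBound (f : ℕ → ℕ) (α : ℝ) : Prop :=
  ∃ C : ℝ, ∀ n : ℕ, 1 ≤ n → (f n : ℝ) ≤ C * (n : ℝ) ^ α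

/-- The `α`-dimension `d_α(L)`: infimum of the integers `k ≥ 1` such that `L ⊆ S^k`
for some language `S` with `p_S(n) = O(n^α)`, with `inf ∅ = ⊤`. -/
noncomputable def polyDim (α : ℝ) (L : Set (List A)) : ℕ∞ :=
  sInf {k : ℕ∞ | ∃ m : ℕ, k = m ∧ 1 ≤ m ∧
    ∃ S : Set (List A), PolyBound (complexity S) α ∧ L ⊆ powL S m}

/-- The accumulative `α`-dimension `d*_α(L)`. -/
noncomputable def polyDimStar (α : ℝ) (L : Set (List A)) : ℕ∞ :=
  sInf {k : ℕ∞ | ∃ m : ℕ, k = m ∧ 1 ≤ m ∧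
    ∃ S : Set (List A), PolyBound (accComplexity S) α ∧ L ⊆ powL S m}

/-- The cost `c(L)`: infimum of the `α ≥ 0` with `d_α(L) < +∞`, with `inf ∅ = ⊤`. -/
noncomputable def cost (L : Set (List A)) : ℝ≥0∞ :=
  sInf {a : ℝ≥0∞ | ∃ α : ℝ, 0 ≤ α ∧ a = ENNReal.ofReal α ∧ polyDim α L ≠ ⊤}

/-- A one-sided word is ultimately periodic if it is of the form `u v v v ⋯`. -/
def UltimatelyPeriodic (x : ℕ → A) : Prop :=
  ∃ N p : ℕ, 0 < p ∧ ∀ n : ℕ, N ≤ n → x (n + p) = x n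

/-- A two-sided word is eventually periodic if it is periodic far enough to the right
and far enough to the left. -/
def EventuallyPeriodicZ (x : ℤ → A) : Prop :=
  (∃ p : ℕ, 0 < p ∧ ∃ N : ℤ, ∀ n : ℤ, N ≤ n → x (n + p) = x n) ∧
  (∃ p : ℕ, 0 < p ∧ ∃ N : ℤ, ∀ n : ℤ, n ≤ N → x (n - p) = x n)

/-- A one-sided word is recurrent if each of its factors occurs infinitely often. -/
def Recurrent (x : ℕ → A) : Prop :=
  ∀ u ∈ Fac x, ∀ N : ℕ, ∃ i : ℕ, N ≤ i ∧ u = wordSeg x i u.length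

/-- `u` is a right special factor for the language `F`. -/
def RightSpecial (F : Set (List A)) (u : List A) : Prop :=
  u ∈ F ∧ ∃ a b : A, a ≠ b ∧ u ++ [a] ∈ F ∧ u ++ [b] ∈ F

/-- `M` is a `D`-marker set for a word with factor set `F`: every factor of length
at least `D n` contains a factor of length `n` belonging to `M`. -/
def MarkerSet (D : ℕ) (M F : Set (List A)) : Prop :=
  ∀ n : ℕ, 1 ≤ n → ∀ u ∈ F, D * n ≤ u.length →
    ∃ v ∈ M, v.length = n ∧ v <:+: u

/-- A language is factorial if it contains all factors of its members. -/
def IsFactorial (S : Set (List A)) : Prop := ∀ u ∈ S, ∀ v : List A, v <:+: u → v ∈ S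

/-- The bound `Σ_{k ∈ I_n ∩ ℕ} p_M(2^k)(1 + 4 p(3n)/2^k)` where
`I_n = (log₂(n/(2D)), log₂(2n)]`, i.e. the sum is over natural `k` with
`n/(2D) < 2^k ≤ 2n`. -/
noncomputable def markerBound (M F : Set (List A)) (D n : ℕ) : ℝ :=
  ∑ k ∈ (Finset.range (2 * n + 2)).filter (fun k => n < 2 * D * 2 ^ k ∧ 2 ^ k ≤ 2 * n),
    (complexity M (2 ^ k) : ℝ) * (1 + 4 * (complexity F (3 * n) : ℝ) / 2 ^ k)

-- The word `u = ∏_{i=1}^{∞} a b^i = a b a b b a b b b ⋯` over `{a,b}`, with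
-- `a = false`, `b = true`: position `n` carries an `a` iff `n = (i-1)(i+2)/2` for some
-- `i ≥ 1`, i.e. iff `2n = m(m+3)` for some `m ≥ 0`.
open Classical in
noncomputable def uWord (n : ℕ) : Bool :=
  if ∃ m : ℕ, 2 * n = m * (m + 3) then false else true

theorem fin_len [Finite A] (L : Set (List A)) (n : ℕ) : {u ∈ L | u.length = n}.Finite :=
  (List.finite_length_eq A n).subset fun _ h => h.2

theorem complexity_mono [Finite A] {L M : Set (List A)} (h : L ⊆ M) (n : ℕ) :
    complexity L n ≤ complexity M n :=
  Set.ncard_le_ncard (fun _ hu => ⟨h hu.1, hu.2⟩) (fin_len M n)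

theorem complexity_prodL [Finite A] (S T : Set (List A)) (n : ℕ) :
    complexity (prodL S T) n ≤
      ∑ i ∈ Finset.range (n + 1), complexity S i * complexity T (n - i) := by
  have hsub : {u ∈ prodL S T | u.length = n} ⊆
      ⋃ i ∈ Finset.range (n + 1), (fun p : List A × List A => p.1 ++ p.2) ''
        ({u ∈ S | u.length = i} ×ˢ {u ∈ T | u.length = n - i}) := by
    rintro _ ⟨⟨s, hs, t, ht, rfl⟩, hlen⟩
    rw [List.length_append] at hlen
    simp only [Set.mem_iUnion, Finset.mem_range]
    exact ⟨s.length, by omega, (s, t), ⟨⟨hs, rfl⟩, ⟨ht, by simp only; omega⟩⟩, rfl⟩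
  have hfin : ∀ i, (({u ∈ S | u.length = i} : Set (List A)) ×ˢ
      {u ∈ T | u.length = n - i}).Finite :=
    fun i => (fin_len S i).prod (fin_len T (n - i))
  refine (Set.ncard_le_ncard hsub ?_).trans ?_
  · exact (Finset.range (n + 1)).finite_toSet.biUnion fun i _ => (hfin i).image _
  · refine (Finset.set_ncard_biUnion_le _ _).trans (Finset.sum_le_sum fun i _ => ?_)
    refine (Set.ncard_image_le (hfin i)).trans ?_
    rw [Set.ncard_prod]
    rfl

theorem powL_bound [Finite A] (S : Set (List A)) (C d : ℕ)
    (hS : ∀ n, complexity S n ≤ C * (n + 1) ^ d) (k : ℕ) :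
    ∃ C' d' : ℕ, ∀ n, complexity (powL S k) n ≤ C' * (n + 1) ^ d' := by
  induction k with
  | zero =>
    refine ⟨1, 0, fun n => ?_⟩
    have : complexity ({[]} : Set (List A)) n ≤ ({[]} : Set (List A)).ncard :=
      Set.ncard_le_ncard (fun _ hu => hu.1) (Set.finite_singleton _)
    simpa [powL] using this
  | succ k ih =>
    obtain ⟨C', d', h⟩ := ih
    refine ⟨C' * C, d' + d + 1, fun n => ?_⟩
    refine (complexity_prodL (powL S k) S n).trans ?_
    have : ∀ i ∈ Finset.range (n + 1), complexity (powL S k) i * complexity S (n - i) ≤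
        (C' * (n + 1) ^ d') * (C * (n + 1) ^ d) := by
      intro i hi
      rw [Finset.mem_range] at hi
      refine Nat.mul_le_mul ((h i).trans ?_) ((hS _).trans ?_)
      · gcongr
        omega
      · gcongr
        omega
    refine (Finset.sum_le_sum this).trans (le_of_eq ?_)
    simp
    ring

theorem exists_nat_bound (f : ℕ → ℕ) (α : ℝ) (h : PolyBound f α) :
    ∃ C d : ℕ, ∀ n, f n ≤ C * (n + 1) ^ d := by
  obtain ⟨C, hC⟩ := h
  refine ⟨⌈C⌉₊ + f 0, ⌈α⌉₊, fun n => ?_⟩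
  rcases Nat.eq_zero_or_pos n with rfl | hn
  · simp
  · have hn' : (1 : ℝ) ≤ n := by exact_mod_cast hn
    have h1 : (f n : ℝ) ≤ ⌈C⌉₊ * (n + 1 : ℝ) ^ ⌈α⌉₊ := by
      calc (f n : ℝ) ≤ C * (n : ℝ) ^ α := hC n hn
        _ ≤ ⌈C⌉₊ * (n : ℝ) ^ α := by
          gcongr
          exact Nat.le_ceil C
        _ ≤ ⌈C⌉₊ * (n : ℝ) ^ ((⌈α⌉₊ : ℕ) : ℝ) := by
          gcongr
          exact Nat.le_ceil α
        _ = ⌈C⌉₊ * (n : ℝ) ^ ⌈α⌉₊ := by rw [Real.rpow_natCast]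
        _ ≤ _ := by
          gcongr
          linarith
    have h2 : f n ≤ ⌈C⌉₊ * (n + 1) ^ ⌈α⌉₊ := by exact_mod_cast h1
    exact h2.trans (Nat.mul_le_mul_right _ (Nat.le_add_right _ _))

/-- `c(L) < +∞` iff the complexity of `L` is polynomially bounded. -/
theorem stmt7 (A : Type u) [Fintype A] [Nonempty A] (L : Set (List A)) :
    cost L ≠ ⊤ ↔ ∃ α : ℝ, 0 ≤ α ∧ PolyBound (complexity L) α := by
  constructor
  · intro h
    have hne : {a : ℝ≥0∞ | ∃ α : ℝ, 0 ≤ α ∧ a = ENNReal.ofReal α ∧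
        polyDim α L ≠ ⊤}.Nonempty := by
      by_contra hc
      rw [Set.not_nonempty_iff_eq_empty] at hc
      exact h (by rw [cost, hc, sInf_empty])
    obtain ⟨_, α, _, _, hd⟩ := hne
    have hne2 : {k : ℕ∞ | ∃ m : ℕ, k = m ∧ 1 ≤ m ∧
        ∃ S : Set (List A), PolyBound (complexity S) α ∧ L ⊆ powL S m}.Nonempty := by
      by_contra hc
      rw [Set.not_nonempty_iff_eq_empty] at hc
      exact hd (by rw [polyDim, hc, sInf_empty])
    obtain ⟨_, m, _, _, S, hS, hL⟩ := hne2
    obtain ⟨C, d, hCd⟩ := exists_nat_bound _ _ hS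
    obtain ⟨C', d', hb⟩ := powL_bound S C d hCd m
    refine ⟨d', Nat.cast_nonneg _, C' * 2 ^ d', fun n hn => ?_⟩
    have h1 : complexity L n ≤ C' * (2 * n) ^ d' := by
      refine (complexity_mono hL n).trans ((hb n).trans ?_)
      gcongr
      omega
    rw [Real.rpow_natCast, mul_assoc, ← mul_pow]
    exact_mod_cast h1
  · rintro ⟨α, h0, h⟩
    have hd : polyDim α L ≠ ⊤ := by
      refine ne_top_of_le_ne_top (ENat.natCast_ne_top 1) (sInf_le ⟨1, rfl, le_rfl, L, h, ?_⟩)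
      intro u hu
      exact ⟨[], rfl, u, hu, rfl⟩
    exact ne_top_of_le_ne_top ENNReal.ofReal_ne_top (sInf_le ⟨α, h0, rfl, hd⟩)
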